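/- If a simple polytope Δ contains no pervasive facets and no flat facets, then every mass linear function on Δ is constant. -/

import Mathlib

open MeasureTheory Function Set

noncomputable section

namespace MassLinearPaper

def dotp {n : ℕ} (v x : Fin n → ℝ) : ℝ := ∑ j, v j * x j

def polytope {n N : ℕ} (η : Fin N → Fin n → ℝ) (κ : Fin N → ℝ) : Set (Fin n → ℝ) :=
  {x | ∀ i, dotp (η i) x ≤ κ i}

def facet {n N : ℕ} (η : Fin N → Fin n → ℝ) (κ : Fin N → ℝ) (i : Fin N) : Set (Fin n → ℝ) :=
  {x ∈ polytope η κ | dotp (η i) x = κ i}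

/-- A polytope is simple if at each point the active conormals are linearly independent. -/
def IsSimplePoly {n N : ℕ} (η : Fin N → Fin n → ℝ) (κ : Fin N → ℝ) : Prop :=
  ∀ x ∈ polytope η κ,
    LinearIndependent ℝ (fun i : {i : Fin N // dotp (η i) x = κ i} => η i.1)

/-- Two support vectors give analogous polytopes: the same collections of facets intersect. -/
def Analogous {n N : ℕ} (η : Fin N → Fin n → ℝ) (κ κ' : Fin N → ℝ) : Prop :=
  ∀ I : Finset (Fin N),
    (⋂ i ∈ I, facet η κ' i).Nonempty ↔ (⋂ i ∈ I, facet η κ i).Nonempty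

/-- The chamber of Δ(κ). -/
def chamber {n N : ℕ} (η : Fin N → Fin n → ℝ) (κ : Fin N → ℝ) : Set (Fin N → ℝ) :=
  connectedComponentIn {κ' | IsSimplePoly η κ' ∧ Analogous η κ κ'} κ

/-- Standing hypotheses: simple, bounded, nonempty interior, all facets nonempty. -/
def GoodPolytope {n N : ℕ} (η : Fin N → Fin n → ℝ) (κ : Fin N → ℝ) : Prop :=
  IsSimplePoly η κ ∧ Bornology.IsBounded (polytope η κ) ∧
    (interior (polytope η κ)).Nonempty ∧ ∀ i, (facet η κ i).Nonempty

/-- The center of mass of Δ(κ). -/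
def centroid {n N : ℕ} (η : Fin N → Fin n → ℝ) (κ : Fin N → ℝ) : Fin n → ℝ :=
  ⨍ x in polytope η κ, x

/-- The volume of Δ(κ) as a function of κ. -/
def volFn {n N : ℕ} (η : Fin N → Fin n → ℝ) : (Fin N → ℝ) → ℝ :=
  fun κ => (volume (polytope η κ)).toReal

/-- Partial derivative with respect to the i-th support number. -/
def pd {N : ℕ} (i : Fin N) (f : (Fin N → ℝ) → ℝ) : (Fin N → ℝ) → ℝ :=
  fun κ => fderiv ℝ f κ (Pi.single i 1)

def face {n N : ℕ} (η : Fin N → Fin n → ℝ) (κ : Fin N → ℝ) (S : Finset (Fin N)) :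
    Set (Fin n → ℝ) :=
  ⋂ i ∈ S, facet η κ i

/-- Centroid of a face with respect to Hausdorff measure of the appropriate dimension. -/
def faceCentroid {n N : ℕ} (η : Fin N → Fin n → ℝ) (κ : Fin N → ℝ) (S : Finset (Fin N)) :
    Fin n → ℝ :=
  ⨍ x in face η κ S, x ∂(μH[(n : ℝ) - S.card])

/-- The facet `F i` is H-symmetric: `⟨H, c(κ)⟩` does not depend on `κ i` on the chamber. -/
def SymmFacet {n N : ℕ} (η : Fin N → Fin n → ℝ) (κ : Fin N → ℝ) (H : Fin n → ℝ)
    (i : Fin N) : Prop :=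
  ∀ κ₁ ∈ chamber η κ, ∀ κ₂ ∈ chamber η κ, (∀ j, j ≠ i → κ₁ j = κ₂ j) →
    dotp H (centroid η κ₁) = dotp H (centroid η κ₂)

/-- H is mass linear with coefficients γ and constant C. -/
def MassLinear {n N : ℕ} (η : Fin N → Fin n → ℝ) (κ : Fin N → ℝ) (H : Fin n → ℝ)
    (γ : Fin N → ℝ) (C : ℝ) : Prop :=
  ∀ κ' ∈ chamber η κ, dotp H (centroid η κ') = ∑ i, γ i * κ' i + C

/-- A facet is pervasive if it meets every other facet. -/
def Pervasive {n N : ℕ} (η : Fin N → Fin n → ℝ) (κ : Fin N → ℝ) (i : Fin N) : Prop :=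
  ∀ j, j ≠ i → (facet η κ i ∩ facet η κ j).Nonempty

/-- A facet is flat if the conormals of all other facets meeting it lie in a hyperplane. -/
def FlatFacet {n N : ℕ} (η : Fin N → Fin n → ℝ) (κ : Fin N → ℝ) (i : Fin N) : Prop :=
  ∃ ξ : Fin n → ℝ, ξ ≠ 0 ∧
    ∀ j, j ≠ i → (facet η κ i ∩ facet η κ j).Nonempty → dotp (η j) ξ = 0

/-- Equivalence of facets, via the criterion of Lemma 4.4. -/
def FacetEquiv {n N : ℕ} (η : Fin N → Fin n → ℝ) (i j : Fin N) : Prop :=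
  i = j ∨ ∃ ξ : Fin n → ℝ, dotp (η i) ξ = 1 ∧ dotp (η j) ξ = -1 ∧
    ∀ k, k ≠ i → k ≠ j → dotp (η k) ξ = 0

def IsEquivClass {n N : ℕ} (η : Fin N → Fin n → ℝ) (I : Finset (Fin N)) : Prop :=
  I.Nonempty ∧ (∀ i ∈ I, ∀ j ∈ I, FacetEquiv η i j) ∧
    ∀ i ∈ I, ∀ j, FacetEquiv η i j → j ∈ I

/-- H is inessential. -/
def Inessential {n N : ℕ} (η : Fin N → Fin n → ℝ) (H : Fin n → ℝ) : Prop :=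
  ∃ β : Fin N → ℝ, H = ∑ i, β i • η i ∧
    ∀ I : Finset (Fin N), IsEquivClass η I → ∑ i ∈ I, β i = 0

end MassLinearPaper

open MassLinearPaper

/-!
Suppose the facet `F i` is disjoint from `F j`. Moving both facets outwards, by `s` and by `t`, adds
two disjoint pieces to the polytope, so inclusion-exclusion holds for the volume and for the moment
`∫ ⟨H, x⟩`. Mass linearity expresses the moment as an affine function of `κ` times the volume `V`,
and comparing the two identities leaves `γ i * s * Δ_j V + γ j * t * Δ_i V = 0`. If `γ i ≠ 0` then,
as `Δ_j V > 0`, also `γ j ≠ 0`; since `Δ_j V` does not change when `F i` moves, it follows that `V`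
is locally affine in `κ i`.

Differencing this affinity in the other support numbers localises it: near an edge contained in
`F i`, the volume of the set of points of slack less than `s` with respect to the facets through the
edge does not change when `F i` moves outwards by `s`. Choose `w` with `⟨η i, w⟩ = 1` that is
orthogonal to the other conormals active at one end of the edge. If `w` were not orthogonal to the
conormal `η p` that cuts off the other end, then translation by `s • w` or by `-s • w` would map the
set before the move into the set after it, or conversely, and miss an open subset near that end. So
`w` is orthogonal to the other active conormals at both ends. The vertices of `F i` being connected
by edges inside `F i`, the same `w` works at all of them, and `F i` is flat. Hence `γ i = 0` for
every facet that is neither pervasive nor flat.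
-/

namespace MassLinearPaper

open Filter Topology

variable {n N : ℕ} {η : Fin N → Fin n → ℝ} {κ : Fin N → ℝ}

@[fun_prop]
lemma continuous_pi_single {X ι M : Type*} [TopologicalSpace X] [TopologicalSpace M] [Zero M]
    [DecidableEq ι] (i : ι) {f : X → M} (hf : Continuous f) :
    Continuous fun x => (Pi.single i (f x) : ι → M) :=
  (continuous_single i).comp hf

section Measure

lemma setIntegral_union_add_setIntegral_inter {X E : Type*} [MeasurableSpace X]
    [NormedAddCommGroup E] [NormedSpace ℝ E] {μ : Measure X} {f : X → E} {s t : Set X}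
    (ht : MeasurableSet t) (hfs : IntegrableOn f s μ) (hft : IntegrableOn f t μ) :
    ∫ x in s ∪ t, f x ∂μ + ∫ x in s ∩ t, f x ∂μ = ∫ x in s, f x ∂μ + ∫ x in t, f x ∂μ := by
  rw [← integral_add_measure (hfs.union hft) (hfs.mono_set inter_subset_left),
    Measure.restrict_union_add_inter s ht, integral_add_measure hfs hft]

lemma measureReal_lt_of_isOpen {X : Type*} [TopologicalSpace X] [MeasurableSpace X]
    [OpensMeasurableSpace X] {μ : Measure X} [μ.IsOpenPosMeasure] {A B U : Set X}
    (hAB : A ⊆ B) (hU : IsOpen U) (hne : U.Nonempty) (hUB : U ⊆ B) (hdisj : Disjoint A U)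
    (hB : μ B ≠ ⊤) : μ.real A < μ.real B := by
  have hA : μ A ≠ ⊤ := measure_ne_top_of_subset hAB hB
  have hU' : μ U ≠ ⊤ := measure_ne_top_of_subset hUB hB
  calc μ.real A < μ.real A + μ.real U :=
        lt_add_of_pos_right _ (ENNReal.toReal_pos (hU.measure_pos μ hne).ne' hU')
    _ = μ.real (A ∪ U) := (measureReal_union hdisj hU.measurableSet hA hU').symm
    _ ≤ μ.real B := measureReal_mono (union_subset hAB hUB) hB

lemma measureReal_image_add_right {G : Type*} [AddGroup G] [MeasurableSpace G] [MeasurableAdd G]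
    (μ : Measure G) [μ.IsAddRightInvariant] (A : Set G) (z : G) :
    μ.real ((· + z) '' A) = μ.real A := by
  rw [image_add_right, Measure.real, measure_preimage_add_right, Measure.real]

end Measure

section Dotp

lemma dotp_add (v x y : Fin n → ℝ) : dotp v (x + y) = dotp v x + dotp v y :=
  dotProduct_add v x y

lemma dotp_sub (v x y : Fin n → ℝ) : dotp v (x - y) = dotp v x - dotp v y :=
  dotProduct_sub v x y

lemma dotp_smul (v : Fin n → ℝ) (r : ℝ) (x : Fin n → ℝ) : dotp v (r • x) = r * dotp v x :=
  dotProduct_smul r v x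

lemma dotp_sum {ι : Type*} (v : Fin n → ℝ) (s : Finset ι) (f : ι → Fin n → ℝ) :
    dotp v (∑ i ∈ s, f i) = ∑ i ∈ s, dotp v (f i) :=
  dotProduct_sum v s f

/-- The pairing with a fixed conormal, bundled as a continuous linear functional. -/
def dotpCLM (v : Fin n → ℝ) : (Fin n → ℝ) →L[ℝ] ℝ :=
  (dotProductBilin ℝ ℝ v).toContinuousLinearMap

lemma dotpCLM_apply (v x : Fin n → ℝ) : dotpCLM v x = dotp v x := rfl

@[fun_prop]
lemma continuous_dotp (v : Fin n → ℝ) : Continuous (dotp v) := (dotpCLM v).continuous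

end Dotp

section Polytope

lemma isClosed_polytope (η : Fin N → Fin n → ℝ) (κ : Fin N → ℝ) : IsClosed (polytope η κ) := by
  simp only [polytope, ofPred_forall]
  exact isClosed_iInter fun i => isClosed_le (by fun_prop) (by fun_prop)

lemma isOpen_forall_dotp_lt (η : Fin N → Fin n → ℝ) (κ : Fin N → ℝ) :
    IsOpen {x | ∀ k, dotp (η k) x < κ k} := by
  simp only [ofPred_forall]
  exact isOpen_iInter_of_finite fun k => isOpen_lt (by fun_prop) (by fun_prop)

lemma polytope_mono (η : Fin N → Fin n → ℝ) : Monotone (polytope η) :=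
  fun _ _ h _ hx k => (hx k).trans (h k)

lemma mem_polytope_add_single {x : Fin n → ℝ} {i : Fin N} {s : ℝ} :
    x ∈ polytope η (κ + Pi.single i s) ↔
      dotp (η i) x ≤ κ i + s ∧ ∀ k, k ≠ i → dotp (η k) x ≤ κ k := by
  refine ⟨fun hx => ⟨by simpa using hx i, fun k hk => by simpa [hk] using hx k⟩,
    fun ⟨hi, hx⟩ k => ?_⟩
  rcases eq_or_ne k i with rfl | hk
  · simpa using hi
  · simpa [hk] using hx k hk

/-- The indices of the constraints that are tight at `x`. -/
def activeSet (η : Fin N → Fin n → ℝ) (κ : Fin N → ℝ) (x : Fin n → ℝ) : Finset (Fin N) :=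
  Finset.univ.filter fun k => dotp (η k) x = κ k

@[simp]
lemma mem_activeSet {x : Fin n → ℝ} {k : Fin N} :
    k ∈ activeSet η κ x ↔ dotp (η k) x = κ k := by
  simp [activeSet]

lemma lt_of_notMem_activeSet {x : Fin n → ℝ} {k : Fin N} (hx : x ∈ polytope η κ)
    (hk : k ∉ activeSet η κ x) : dotp (η k) x < κ k :=
  (hx k).lt_of_ne (by simpa using hk)

lemma eventually_lt_of_notMem_activeSet {x : Fin n → ℝ} (hx : x ∈ polytope η κ) :
    ∀ᶠ p : (Fin N → ℝ) × (Fin n → ℝ) in 𝓝 (κ, x),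
      ∀ k ∉ activeSet η κ x, dotp (η k) p.2 < p.1 k := by
  simp only [eventually_all]
  intro k hk
  exact (isOpen_lt (by fun_prop) (by fun_prop)).mem_nhds (lt_of_notMem_activeSet hx hk)

/-- The linear map recording the pairings with the conormals of the constraints tight at `x`. -/
def activeMap (η : Fin N → Fin n → ℝ) (κ : Fin N → ℝ) (x : Fin n → ℝ) :
    (Fin n → ℝ) →ₗ[ℝ] ({k : Fin N // dotp (η k) x = κ k} → ℝ) :=
  (Matrix.of fun k : {k : Fin N // dotp (η k) x = κ k} => η k).mulVecLin

lemma activeMap_apply (x u : Fin n → ℝ) (k : {k : Fin N // dotp (η k) x = κ k}) :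
    activeMap η κ x u k = dotp (η k) u := rfl

lemma finrank_activeMap_codomain (x : Fin n → ℝ) :
    Module.finrank ℝ ({k : Fin N // dotp (η k) x = κ k} → ℝ) = (activeSet η κ x).card := by
  rw [Module.finrank_fintype_fun_eq_card, Fintype.card_subtype, activeSet]

lemma IsSimplePoly.activeMap_surjective (hs : IsSimplePoly η κ) {x : Fin n → ℝ}
    (hx : x ∈ polytope η κ) : Surjective (activeMap η κ x) := by
  rw [← LinearMap.range_eq_top]
  refine Submodule.eq_top_of_finrank_eq ?_
  rw [Module.finrank_fintype_fun_eq_card]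
  exact LinearIndependent.rank_matrix (M := Matrix.of fun k : {k // dotp (η k) x = κ k} => η k)
    (hs x hx)

lemma IsSimplePoly.exists_dotp_eq (hs : IsSimplePoly η κ) {x : Fin n → ℝ}
    (hx : x ∈ polytope η κ) :
    ∃ L : (Fin N → ℝ) →ₗ[ℝ] (Fin n → ℝ), ∀ c, ∀ k ∈ activeSet η κ x, dotp (η k) (L c) = c k := by
  obtain ⟨g, hg⟩ := (activeMap η κ x).exists_rightInverse_of_surjective
    (LinearMap.range_eq_top.2 (hs.activeMap_surjective hx))
  refine ⟨g ∘ₗ LinearMap.funLeft ℝ ℝ Subtype.val, fun c k hk => ?_⟩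
  exact congr_fun (LinearMap.congr_fun hg (c ∘ Subtype.val)) ⟨k, mem_activeSet.1 hk⟩

end Polytope

section Stability

lemma IsSimplePoly.eventually_exists_activeSet_eq (hs : IsSimplePoly η κ) {x : Fin n → ℝ}
    (hx : x ∈ polytope η κ) :
    ∀ᶠ κ' in 𝓝 κ, ∃ y ∈ polytope η κ', activeSet η κ' y = activeSet η κ x := by
  obtain ⟨L, hL⟩ := hs.exists_dotp_eq hx
  have hLc : Continuous L := L.continuous_of_finiteDimensional
  have htend : Tendsto (fun κ' => (κ', x + L (κ' - κ))) (𝓝 κ) (𝓝 (κ, x)) :=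
    Continuous.tendsto' (by fun_prop) _ _ (by simp)
  filter_upwards [htend.eventually (eventually_lt_of_notMem_activeSet hx)] with κ' hlt
  have hinactive : ∀ k ∉ activeSet η κ x, dotp (η k) (x + L (κ' - κ)) < κ' k := hlt
  have hactive : ∀ k ∈ activeSet η κ x, dotp (η k) (x + L (κ' - κ)) = κ' k := fun k hk => by
    rw [dotp_add, hL _ k hk, mem_activeSet.1 hk, Pi.sub_apply, add_sub_cancel]
  refine ⟨x + L (κ' - κ), fun k => ?_, Finset.ext fun k => ⟨fun hk => ?_, fun hk => ?_⟩⟩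
  · by_cases hk : k ∈ activeSet η κ x
    exacts [(hactive k hk).le, (hinactive k hk).le]
  · by_contra hk'
    exact (hinactive k hk').ne (mem_activeSet.1 hk)
  · exact mem_activeSet.2 (hactive k hk)

lemma IsSimplePoly.exists_forall_dotp_lt (hs : IsSimplePoly η κ) (hne : (polytope η κ).Nonempty) :
    ∃ x, ∀ k, dotp (η k) x < κ k := by
  obtain ⟨x, hx⟩ := hne
  have htend : Tendsto (fun s : ℝ => κ - fun _ => s) (𝓝[>] 0) (𝓝 κ) :=
    (Continuous.tendsto' (by fun_prop) _ _ (by ext; simp)).mono_left nhdsWithin_le_nhds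
  obtain ⟨s, ⟨y, hy, -⟩, hs₀⟩ :=
    ((htend.eventually (hs.eventually_exists_activeSet_eq hx)).and self_mem_nhdsWithin).exists
  exact ⟨y, fun k => (hy k).trans_lt (sub_lt_self _ hs₀)⟩

lemma IsSimplePoly.exists_isCompact_eventually_subset (hs : IsSimplePoly η κ)
    (hc : IsCompact (polytope η κ)) (hne : (polytope η κ).Nonempty) :
    ∃ K, IsCompact K ∧ ∀ᶠ κ' in 𝓝 κ, polytope η κ' ⊆ K := by
  obtain ⟨x₀, hx₀⟩ := hs.exists_forall_dotp_lt hne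
  -- The midpoint of `x₀` and a point of a nearby polytope lies in the given polytope.
  refine ⟨(fun y => (2 : ℝ) • y - x₀) '' polytope η κ, hc.image (by fun_prop), ?_⟩
  have hnear : ∀ᶠ κ' in 𝓝 κ, ∀ k, κ' k + dotp (η k) x₀ < 2 * κ k :=
    eventually_all.2 fun k =>
      (isOpen_lt (by fun_prop) (by fun_prop)).mem_nhds (by
        simp only [mem_ofPred_eq]; linarith [hx₀ k])
  filter_upwards [hnear] with κ' hκ' x hx
  refine ⟨(1 / 2 : ℝ) • (x + x₀), fun k => ?_, by simp [smul_smul]⟩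
  rw [dotp_smul, dotp_add]
  linarith [hx k, hκ' k]

lemma IsSimplePoly.eventually_isCompact (hs : IsSimplePoly η κ)
    (hc : IsCompact (polytope η κ)) (hne : (polytope η κ).Nonempty) :
    ∀ᶠ κ' in 𝓝 κ, IsCompact (polytope η κ') := by
  obtain ⟨K, hK, hsub⟩ := hs.exists_isCompact_eventually_subset hc hne
  exact hsub.mono fun κ' => hK.of_isClosed_subset (isClosed_polytope η κ')

lemma IsSimplePoly.eventually_exists_subset_activeSet (hs : IsSimplePoly η κ)
    (hc : IsCompact (polytope η κ)) (hne : (polytope η κ).Nonempty) :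
    ∀ᶠ p : (Fin N → ℝ) × (Fin N → ℝ) in 𝓝 (κ, κ), ∀ x ∈ polytope η p.2,
      ∃ y ∈ polytope η κ, ∀ k, p.1 k ≤ dotp (η k) x → k ∈ activeSet η κ y := by
  obtain ⟨K, hK, hsub⟩ := hs.exists_isCompact_eventually_subset hc hne
  have hlocal : ∀ x ∈ K, ∀ᶠ z : ((Fin N → ℝ) × (Fin N → ℝ)) × (Fin n → ℝ) in 𝓝 ((κ, κ), x),
      z.2 ∈ polytope η z.1.2 →
        ∃ y ∈ polytope η κ, ∀ k, z.1.1 k ≤ dotp (η k) z.2 → k ∈ activeSet η κ y := by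
    intro x _
    by_cases hx : x ∈ polytope η κ
    · have htend : Tendsto (fun z : ((Fin N → ℝ) × (Fin N → ℝ)) × (Fin n → ℝ) => (z.1.1, z.2))
          (𝓝 ((κ, κ), x)) (𝓝 (κ, x)) := Continuous.tendsto' (by fun_prop) _ _ rfl
      filter_upwards [htend.eventually (eventually_lt_of_notMem_activeSet hx)] with z hz _
      exact ⟨x, hx, fun k hk => by_contra fun hk' => (hz k hk').not_ge hk⟩
    · obtain ⟨k, hk⟩ : ∃ k, κ k < dotp (η k) x := by simpa [polytope] using hx
      have hopen : IsOpen {z : ((Fin N → ℝ) × (Fin N → ℝ)) × (Fin n → ℝ) |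
          z.1.2 k < dotp (η k) z.2} := isOpen_lt (by fun_prop) (by fun_prop)
      filter_upwards [hopen.mem_nhds hk] with z hz hz'
      exact absurd (hz' k) (not_le.2 hz)
  filter_upwards [hK.eventually_forall_of_forall_eventually
    (P := fun p x => x ∈ polytope η p.2 →
      ∃ y ∈ polytope η κ, ∀ k, p.1 k ≤ dotp (η k) x → k ∈ activeSet η κ y) hlocal,
    (continuous_snd.tendsto (κ, κ)).eventually hsub] with p hp hpK x hx
  exact hp x (hpK hx) hx

lemma mem_face_iff {S : Finset (Fin N)} (hS : S.Nonempty) {x : Fin n → ℝ} :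
    x ∈ face η κ S ↔ x ∈ polytope η κ ∧ S ⊆ activeSet η κ x := by
  obtain ⟨i, hi⟩ := hS
  simp only [face, facet, mem_iInter, Finset.subset_iff, mem_activeSet]
  exact ⟨fun h => ⟨(h i hi).1, fun k hk => (h k hk).2⟩, fun h k hk => ⟨h.1, h.2 hk⟩⟩

lemma face_nonempty_of_forall_subset_activeSet {κ' : Fin N → ℝ}
    (h : ∀ x ∈ polytope η κ, ∃ y ∈ polytope η κ', activeSet η κ x ⊆ activeSet η κ' y)
    {I : Finset (Fin N)} (hI : (face η κ I).Nonempty) : (face η κ' I).Nonempty := by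
  rcases I.eq_empty_or_nonempty with rfl | hI₀
  · exact ⟨0, by simp [face]⟩
  · obtain ⟨x, hx⟩ := hI
    rw [mem_face_iff hI₀] at hx
    obtain ⟨y, hy, hxy⟩ := h x hx.1
    exact ⟨y, (mem_face_iff hI₀).2 ⟨hy, hx.2.trans hxy⟩⟩

lemma IsSimplePoly.of_forall_subset_activeSet {κ' : Fin N → ℝ} (hs : IsSimplePoly η κ)
    (h : ∀ x ∈ polytope η κ', ∃ y ∈ polytope η κ, activeSet η κ' x ⊆ activeSet η κ y) :
    IsSimplePoly η κ' := by
  intro x hx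
  obtain ⟨y, hy, hxy⟩ := h x hx
  have hmem : ∀ k, dotp (η k) x = κ' k → dotp (η k) y = κ k := fun k hk => by
    simpa using hxy (mem_activeSet.2 hk)
  exact (hs y hy).comp (Subtype.map id hmem) (Subtype.map_injective hmem injective_id)

lemma IsSimplePoly.chamber_mem_nhds (hs : IsSimplePoly η κ)
    (hc : IsCompact (polytope η κ)) (hne : (polytope η κ).Nonempty) : chamber η κ ∈ 𝓝 κ := by
  have hkeep : ∀ᶠ κ' in 𝓝 κ, ∀ I : Finset (Fin N),
      (face η κ I).Nonempty → (face η κ' I).Nonempty := by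
    rw [eventually_all]
    intro I
    rcases I.eq_empty_or_nonempty with rfl | hI
    · exact .of_forall fun κ' _ => ⟨0, by simp [face]⟩
    rcases (face η κ I).eq_empty_or_nonempty with hempty | ⟨x, hx⟩
    · exact .of_forall fun κ' h => absurd hempty h.ne_empty
    rw [mem_face_iff hI] at hx
    filter_upwards [hs.eventually_exists_activeSet_eq hx.1] with κ' ⟨y, hy, hyx⟩ _
    exact ⟨y, (mem_face_iff hI).2 ⟨hy, hyx ▸ hx.2⟩⟩
  have htend : Tendsto (fun κ' : Fin N → ℝ => (κ', κ')) (𝓝 κ) (𝓝 (κ, κ)) :=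
    Continuous.tendsto (by fun_prop) κ
  apply connectedComponentIn_mem_nhds
  filter_upwards [hkeep, htend.eventually (hs.eventually_exists_subset_activeSet hc hne)]
    with κ' hkeep hnew
  have hnew' : ∀ x ∈ polytope η κ', ∃ y ∈ polytope η κ, activeSet η κ' x ⊆ activeSet η κ y :=
    fun x hx => (hnew x hx).imp fun y ⟨hy, hxy⟩ =>
      ⟨hy, fun k hk => hxy k (mem_activeSet.1 hk).ge⟩
  exact ⟨hs.of_forall_subset_activeSet hnew', fun I =>
    ⟨face_nonempty_of_forall_subset_activeSet hnew', hkeep I⟩⟩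

end Stability

section DisjointFacets

lemma polytope_add_single_inter {i j : Fin N} (hij : i ≠ j) {s t : ℝ} (hs : 0 ≤ s) (ht : 0 ≤ t) :
    polytope η (κ + Pi.single i s) ∩ polytope η (κ + Pi.single j t) = polytope η κ := by
  ext x
  simp only [mem_inter_iff, mem_polytope_add_single]
  refine ⟨fun ⟨hi, hj⟩ k => ?_, fun hx => ⟨⟨?_, fun k _ => hx k⟩, ⟨?_, fun k _ => hx k⟩⟩⟩
  · rcases eq_or_ne k i with rfl | hk
    exacts [hj.2 _ hij, hi.2 _ hk]
  · linarith [hx i]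
  · linarith [hx j]

lemma polytope_add_single_add_single_eq_union {i j : Fin N} {s t : ℝ} (hs : 0 ≤ s) (ht : 0 ≤ t)
    (h : ∀ x ∈ polytope η (κ + Pi.single i s + Pi.single j t),
      ¬ (κ i < dotp (η i) x ∧ κ j < dotp (η j) x)) :
    polytope η (κ + Pi.single i s + Pi.single j t) =
      polytope η (κ + Pi.single i s) ∪ polytope η (κ + Pi.single j t) := by
  have hi : 0 ≤ (Pi.single i s : Fin N → ℝ) := Pi.single_nonneg.2 hs
  have hj : 0 ≤ (Pi.single j t : Fin N → ℝ) := Pi.single_nonneg.2 ht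
  refine (union_subset ?_ ?_).antisymm' fun x hx => ?_
  · exact polytope_mono η (le_add_of_nonneg_right hj)
  · exact polytope_mono η (add_le_add_left (le_add_of_nonneg_right hi) _)
  rcases not_and_or.1 (h x hx) with hxi | hxj
  · refine .inr fun k => ?_
    rcases eq_or_ne k i with rfl | hk
    · exact (not_lt.1 hxi).trans (le_add_of_nonneg_right (hj k))
    · simpa [hk] using hx k
  · refine .inl fun k => ?_
    rcases eq_or_ne k j with rfl | hk
    · exact (not_lt.1 hxj).trans (le_add_of_nonneg_right (hi k))
    · simpa [hk] using hx k

lemma integral_dotp_polytope (hc : IsCompact (polytope η κ)) (H : Fin n → ℝ) :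
    ∫ x in polytope η κ, dotp H x = dotp H (centroid η κ) * volFn η κ := by
  have hint : IntegrableOn (fun x : Fin n → ℝ => x) (polytope η κ) :=
    continuous_id.continuousOn.integrableOn_compact hc
  calc ∫ x in polytope η κ, dotp H x = dotp H (∫ x in polytope η κ, x) :=
        (dotpCLM H).integral_comp_comm hint
    _ = dotp H (volFn η κ • centroid η κ) := by
        rw [centroid, volFn, ← Measure.real, measure_smul_setAverage _ hc.measure_ne_top]
    _ = dotp H (centroid η κ) * volFn η κ := by rw [dotp_smul, mul_comm]

lemma IsSimplePoly.eventually_setIntegral_add (hs : IsSimplePoly η κ)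
    (hc : IsCompact (polytope η κ)) (hne : (polytope η κ).Nonempty) {i j : Fin N} (hij : i ≠ j)
    (hdisj : Disjoint (facet η κ i) (facet η κ j)) :
    ∀ᶠ p : (Fin N → ℝ) × ℝ × ℝ in 𝓝 (κ, 0, 0), 0 ≤ p.2.1 → 0 ≤ p.2.2 →
      ∀ g : (Fin n → ℝ) → ℝ, Continuous g →
        (∫ x in polytope η (p.1 + Pi.single i p.2.1 + Pi.single j p.2.2), g x) +
            (∫ x in polytope η p.1, g x) =
          (∫ x in polytope η (p.1 + Pi.single i p.2.1), g x) +
            (∫ x in polytope η (p.1 + Pi.single j p.2.2), g x) := by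
  have hi : Tendsto (fun p : (Fin N → ℝ) × ℝ × ℝ => p.1 + Pi.single i p.2.1) (𝓝 (κ, 0, 0))
    (𝓝 κ) := Continuous.tendsto' (by fun_prop) _ _ (by simp)
  have hj : Tendsto (fun p : (Fin N → ℝ) × ℝ × ℝ => p.1 + Pi.single j p.2.2) (𝓝 (κ, 0, 0))
    (𝓝 κ) := Continuous.tendsto' (by fun_prop) _ _ (by simp)
  have hij' : Tendsto (fun p : (Fin N → ℝ) × ℝ × ℝ =>
      (p.1, p.1 + Pi.single i p.2.1 + Pi.single j p.2.2)) (𝓝 (κ, 0, 0)) (𝓝 (κ, κ)) :=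
    Continuous.tendsto' (by fun_prop) _ _ (by simp)
  filter_upwards [hi.eventually (hs.eventually_isCompact hc hne),
    hj.eventually (hs.eventually_isCompact hc hne),
    hij'.eventually (hs.eventually_exists_subset_activeSet hc hne)] with p hci hcj hsep hp₁ hp₂ g hg
  have hsep' : ∀ x ∈ polytope η (p.1 + Pi.single i p.2.1 + Pi.single j p.2.2),
      ¬ (p.1 i < dotp (η i) x ∧ p.1 j < dotp (η j) x) := fun x hx hlt => by
    obtain ⟨y, hy, hxy⟩ := hsep x hx
    exact disjoint_left.1 hdisj ⟨hy, mem_activeSet.1 (hxy i hlt.1.le)⟩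
      ⟨hy, mem_activeSet.1 (hxy j hlt.2.le)⟩
  have hinter := polytope_add_single_inter (η := η) (κ := p.1) hij hp₁ hp₂
  rw [polytope_add_single_add_single_eq_union hp₁ hp₂ hsep', ← hinter]
  exact setIntegral_union_add_setIntegral_inter (isClosed_polytope _ _).measurableSet
    (hg.continuousOn.integrableOn_compact hci) (hg.continuousOn.integrableOn_compact hcj)

lemma MassLinear.eventually_mul_sub_add_mul_sub {H : Fin n → ℝ} {γ : Fin N → ℝ} {C : ℝ}
    (hH : MassLinear η κ H γ C) (hs : IsSimplePoly η κ) (hc : IsCompact (polytope η κ))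
    (hne : (polytope η κ).Nonempty) {i j : Fin N} (hij : i ≠ j)
    (hdisj : Disjoint (facet η κ i) (facet η κ j)) :
    ∀ᶠ p : (Fin N → ℝ) × ℝ × ℝ in 𝓝 (κ, 0, 0), 0 ≤ p.2.1 → 0 ≤ p.2.2 →
      γ i * p.2.1 * (volFn η (p.1 + Pi.single j p.2.2) - volFn η p.1) +
        γ j * p.2.2 * (volFn η (p.1 + Pi.single i p.2.1) - volFn η p.1) = 0 := by
  have hmoment : ∀ᶠ κ' in 𝓝 κ,
      ∫ x in polytope η κ', dotp H x = (∑ k, γ k * κ' k + C) * volFn η κ' := by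
    filter_upwards [hs.chamber_mem_nhds hc hne, hs.eventually_isCompact hc hne] with κ' hκ' hc'
    rw [integral_dotp_polytope hc', hH κ' hκ']
  have htend (f : (Fin N → ℝ) × ℝ × ℝ → Fin N → ℝ) (hf : Continuous f) (hf₀ : f (κ, 0, 0) = κ) :
      ∀ᶠ p in 𝓝 (κ, 0, 0),
        ∫ x in polytope η (f p), dotp H x = (∑ k, γ k * f p k + C) * volFn η (f p) :=
    (hf.tendsto' _ _ hf₀).eventually hmoment
  filter_upwards [hs.eventually_setIntegral_add hc hne hij hdisj,
    htend (fun p => p.1) (by fun_prop) rfl,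
    htend (fun p => p.1 + Pi.single i p.2.1) (by fun_prop) (by simp),
    htend (fun p => p.1 + Pi.single j p.2.2) (by fun_prop) (by simp),
    htend (fun p => p.1 + Pi.single i p.2.1 + Pi.single j p.2.2) (by fun_prop) (by simp)]
    with p hadd h₀ hi hj hij hp₁ hp₂
  have hvol := hadd hp₁ hp₂ (fun _ => 1) continuous_const
  have hdotp := hadd hp₁ hp₂ (dotp H) (continuous_dotp H)
  simp only [setIntegral_const, smul_eq_mul, mul_one] at hvol
  change volFn η _ + volFn η _ = volFn η _ + volFn η _ at hvol
  simp only [h₀, hi, hj, hij, Pi.add_apply, mul_add, Finset.sum_add_distrib, Pi.single_apply,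
    mul_ite, mul_zero, Finset.sum_ite_eq', Finset.mem_univ, if_true] at hdotp
  linear_combination hdotp - (∑ k, γ k * p.1 k + C + γ i * p.2.1 + γ j * p.2.2) * hvol

lemma IsSimplePoly.eventually_volFn_lt (hs : IsSimplePoly η κ) (hc : IsCompact (polytope η κ))
    {j : Fin N} (hj : (facet η κ j).Nonempty) :
    ∀ᶠ t in 𝓝[>] 0, volFn η κ < volFn η (κ + Pi.single j t) := by
  obtain ⟨x, hx, hxj⟩ := hj
  have htend : Tendsto (fun t : ℝ => (κ - fun _ => t / 2) + Pi.single j t) (𝓝[>] 0) (𝓝 κ) :=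
    (Continuous.tendsto' (by fun_prop) _ _ (by ext; simp)).mono_left nhdsWithin_le_nhds
  have htend' : Tendsto (fun t : ℝ => κ + Pi.single j t) (𝓝[>] 0) (𝓝 κ) :=
    (Continuous.tendsto' (by fun_prop) _ _ (by simp)).mono_left nhdsWithin_le_nhds
  filter_upwards [htend.eventually (hs.eventually_exists_activeSet_eq hx),
    htend'.eventually (hs.eventually_isCompact hc ⟨x, hx⟩), self_mem_nhdsWithin]
    with t ⟨y, hy, hyx⟩ hc' ht
  rw [mem_Ioi] at ht
  have hyj : dotp (η j) y = κ j + t / 2 := by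
    rw [mem_activeSet.1 (hyx ▸ mem_activeSet.2 hxj), Pi.add_apply, Pi.sub_apply,
      Pi.single_eq_same]
    ring
  have hnonneg : 0 ≤ (Pi.single j t : Fin N → ℝ) := Pi.single_nonneg.2 ht.le
  let U := {z | ∀ k, dotp (η k) z < (κ + Pi.single j t : Fin N → ℝ) k} ∩ {z | κ j < dotp (η j) z}
  have hU : IsOpen U :=
    (isOpen_forall_dotp_lt _ _).inter (isOpen_lt continuous_const (continuous_dotp _))
  have hyU : y ∈ U := ⟨fun k => (hy k).trans_lt (by simpa using ht), by
    rw [mem_ofPred_eq, hyj]; linarith⟩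
  exact measureReal_lt_of_isOpen (polytope_mono η (le_add_of_nonneg_right hnonneg)) hU ⟨y, hyU⟩
    (fun z hz k => (hz.1 k).le) (disjoint_left.2 fun z hz hz' => hz'.2.not_ge (hz j))
    hc'.measure_ne_top

/-- Local affinity of the volume in the `i`-th support number. Its derivative in that direction
being the volume of the `i`-th facet, this says that the volume of that facet does not depend on
its own support number. -/
def VolLocallyAffine (η : Fin N → Fin n → ℝ) (κ : Fin N → ℝ) (i : Fin N) : Prop :=
  ∀ᶠ p : (Fin N → ℝ) × ℝ in 𝓝 (κ, 0), 0 ≤ p.2 →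
    volFn η (p.1 + Pi.single i p.2) + volFn η (p.1 - Pi.single i p.2) = 2 * volFn η p.1

lemma MassLinear.volLocallyAffine {H : Fin n → ℝ} {γ : Fin N → ℝ} {C : ℝ}
    (hH : MassLinear η κ H γ C) (hs : IsSimplePoly η κ) (hc : IsCompact (polytope η κ))
    {i j : Fin N} (hij : i ≠ j) (hdisj : Disjoint (facet η κ i) (facet η κ j))
    (hj : (facet η κ j).Nonempty) (hγ : γ i ≠ 0) : VolLocallyAffine η κ i := by
  have hmix := hH.eventually_mul_sub_add_mul_sub hs hc (hj.mono (sep_subset _ _)) hij hdisj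
  have hγj : γ j ≠ 0 := by
    intro hγj
    have htend : Tendsto (fun t : ℝ => (κ, t, t)) (𝓝[>] 0) (𝓝 (κ, 0, 0)) :=
      (Continuous.tendsto' (by fun_prop) _ _ rfl).mono_left nhdsWithin_le_nhds
    obtain ⟨t, ⟨hmix, hlt⟩, ht⟩ := (((htend.eventually hmix).and
      (hs.eventually_volFn_lt hc hj)).and self_mem_nhdsWithin).exists
    have hzero := hmix (le_of_lt ht) (le_of_lt ht)
    rw [hγj, zero_mul, zero_mul, add_zero] at hzero
    exact mul_ne_zero (mul_ne_zero hγ (ne_of_gt ht)) (sub_pos.2 hlt).ne' hzero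
  have hs₁ : Tendsto (fun p : (Fin N → ℝ) × ℝ => (p.1 - Pi.single i p.2, p.2, p.2))
      (𝓝 (κ, 0)) (𝓝 (κ, 0, 0)) := Continuous.tendsto' (by fun_prop) _ _ (by simp)
  have hs₂ : Tendsto (fun p : (Fin N → ℝ) × ℝ => (p.1 - Pi.single i p.2, p.2 + p.2, p.2))
      (𝓝 (κ, 0)) (𝓝 (κ, 0, 0)) := Continuous.tendsto' (by fun_prop) _ _ (by simp)
  filter_upwards [hs₁.eventually hmix, hs₂.eventually hmix] with p h₁ h₂ hp
  rcases hp.eq_or_lt with hp₀ | hp₀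
  · simp [← hp₀, two_mul]
  have h₁ := h₁ hp hp
  have h₂ := h₂ (add_nonneg hp hp) hp
  rw [sub_add_cancel] at h₁
  rw [Pi.single_add, ← add_assoc, sub_add_cancel] at h₂
  have hprod : γ j * p.2 * (volFn η (p.1 + Pi.single i p.2) + volFn η (p.1 - Pi.single i p.2) -
      2 * volFn η p.1) = 0 := by linear_combination h₂ - 2 * h₁
  exact sub_eq_zero.1 ((mul_eq_zero.1 hprod).resolve_left (mul_ne_zero hγj hp₀.ne'))

end DisjointFacets

section Tube

/-- The points of the polytope within slack `s` of each of the facets indexed by `T`: a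
neighbourhood of the face `T` in the polytope. -/
def tube (η : Fin N → Fin n → ℝ) (κ : Fin N → ℝ) (T : Finset (Fin N)) (s : ℝ) :
    Set (Fin n → ℝ) :=
  {x ∈ polytope η κ | ∀ k ∈ T, κ k - s < dotp (η k) x}

variable {T : Finset (Fin N)} {i k : Fin N} {s : ℝ}

lemma tube_subset_polytope : tube η κ T s ⊆ polytope η κ := sep_subset _ _

lemma measurableSet_tube : MeasurableSet (tube η κ T s) := by
  have htube : tube η κ T s = polytope η κ ∩ ⋂ k ∈ T, {x | κ k - s < dotp (η k) x} := by
    ext; simp [tube]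
  rw [htube]
  exact (isClosed_polytope η κ).measurableSet.inter <| T.measurableSet_biInter fun k _ =>
    measurableSet_lt measurable_const (continuous_dotp _).measurable

lemma tube_empty : tube η κ ∅ s = polytope η κ := by simp [tube]

lemma mem_tube_sub_single {x : Fin n → ℝ} (hk : k ∉ T) :
    x ∈ tube η (κ - Pi.single k s) T s ↔ (dotp (η k) x ≤ κ k - s ∧
      ∀ l, l ≠ k → dotp (η l) x ≤ κ l) ∧ ∀ l ∈ T, κ l - s < dotp (η l) x := by
  have hT : ∀ l ∈ T, (κ - Pi.single k s : Fin N → ℝ) l = κ l := fun l hl => by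
    simp [ne_of_mem_of_not_mem hl hk]
  rw [sub_eq_add_neg, ← Pi.single_neg] at hT ⊢
  exact and_congr mem_polytope_add_single (forall₂_congr fun l hl => by rw [hT l hl])

lemma tube_sub_single_subset (hk : k ∉ T) (hs : 0 ≤ s) :
    tube η (κ - Pi.single k s) T s ⊆ tube η κ T s := by
  intro x hx
  obtain ⟨⟨hxk, hx⟩, hxT⟩ := (mem_tube_sub_single hk).1 hx
  refine ⟨fun l => ?_, hxT⟩
  rcases eq_or_ne l k with rfl | hl
  exacts [hxk.trans (sub_le_self _ hs), hx l hl]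

lemma tube_insert (hk : k ∉ T) :
    tube η κ (insert k T) s = tube η κ T s \ tube η (κ - Pi.single k s) T s := by
  ext x
  rw [Set.mem_sdiff, mem_tube_sub_single hk]
  simp only [tube, mem_ofPred_eq, Finset.forall_mem_insert]
  constructor
  · rintro ⟨hx, hxk, hxT⟩
    exact ⟨⟨hx, hxT⟩, fun h => hxk.not_ge h.1.1⟩
  · rintro ⟨⟨hx, hxT⟩, hnot⟩
    exact ⟨hx, not_le.1 fun hxk => hnot ⟨⟨hxk, fun l _ => hx l⟩, hxT⟩, hxT⟩

lemma measureReal_tube_insert (hc : IsCompact (polytope η κ)) (hk : k ∉ T) (hs : 0 ≤ s) :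
    volume.real (tube η κ (insert k T) s) =
      volume.real (tube η κ T s) - volume.real (tube η (κ - Pi.single k s) T s) := by
  rw [tube_insert hk, measureReal_sdiff (tube_sub_single_subset hk hs) measurableSet_tube
    (measure_ne_top_of_subset tube_subset_polytope hc.measure_ne_top)]

lemma VolLocallyAffine.eventually_measureReal_tube (hi : VolLocallyAffine η κ i)
    (hs : IsSimplePoly η κ) (hc : IsCompact (polytope η κ)) (hne : (polytope η κ).Nonempty)
    (hiT : i ∉ T) :
    ∀ᶠ p : (Fin N → ℝ) × ℝ in 𝓝 (κ, 0), 0 ≤ p.2 →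
      volume.real (tube η (p.1 + Pi.single i p.2) (insert i T) p.2) =
        volume.real (tube η p.1 (insert i T) p.2) := by
  have hbase : Tendsto (fun p : (Fin N → ℝ) × ℝ => p.1) (𝓝 (κ, 0)) (𝓝 κ) :=
    Continuous.tendsto' (by fun_prop) _ _ rfl
  have hshift : Tendsto (fun p : (Fin N → ℝ) × ℝ => p.1 + Pi.single i p.2) (𝓝 (κ, 0)) (𝓝 κ) :=
    Continuous.tendsto' (by fun_prop) _ _ (by simp)
  have hcompact := (hbase.eventually (hs.eventually_isCompact hc hne)).and
    (hshift.eventually (hs.eventually_isCompact hc hne))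
  induction T using Finset.induction_on with
  | empty =>
    filter_upwards [hi, hcompact] with p hp ⟨hc₀, hc₁⟩ hp₂
    rw [measureReal_tube_insert hc₀ hiT hp₂, measureReal_tube_insert hc₁ hiT hp₂,
      add_sub_cancel_right]
    simp only [tube_empty]
    change volFn η _ - volFn η _ = volFn η _ - volFn η _
    linear_combination hp hp₂
  | insert k T hkT ih =>
    rw [Finset.mem_insert, not_or] at hiT
    have hk : k ∉ insert i T := by simp [hkT, Ne.symm hiT.1]
    have htend : Tendsto (fun p : (Fin N → ℝ) × ℝ => (p.1 - Pi.single k p.2, p.2))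
        (𝓝 (κ, 0)) (𝓝 (κ, 0)) := Continuous.tendsto' (by fun_prop) _ _ (by simp)
    filter_upwards [ih hiT.2, htend.eventually (ih hiT.2), hcompact] with p h₀ h₁ ⟨hc₀, hc₁⟩ hp₂
    rw [Finset.insert_comm, measureReal_tube_insert hc₀ hk hp₂,
      measureReal_tube_insert hc₁ hk hp₂, h₀ hp₂, ← h₁ hp₂, add_sub_right_comm]

end Tube

section Vertex

variable {v x y : Fin n → ℝ}

lemma activeSet_subset_of_mem_openSegment {a b : Fin n → ℝ} (ha : a ∈ polytope η κ)
    (hb : b ∈ polytope η κ) (hx : x ∈ openSegment ℝ a b) :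
    activeSet η κ x ⊆ activeSet η κ a := by
  obtain ⟨α, β, hα, hβ, hαβ, rfl⟩ := hx
  intro k hk
  rw [mem_activeSet, dotp_add, dotp_smul, dotp_smul] at hk
  refine mem_activeSet.2 ((ha k).antisymm (le_of_mul_le_mul_left ?_ hα))
  calc α * κ k = κ k - β * κ k := by linear_combination κ k * hαβ
    _ ≤ α * dotp (η k) a := by linarith [mul_le_mul_of_nonneg_left (hb k) hβ.le]

lemma activeSet_subset_union_of_mem_segment {a b : Fin n → ℝ} (ha : a ∈ polytope η κ)
    (hb : b ∈ polytope η κ) (hx : x ∈ segment ℝ a b) :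
    activeSet η κ x ⊆ activeSet η κ a ∪ activeSet η κ b := by
  rw [← insert_endpoints_openSegment] at hx
  rcases hx with rfl | rfl | hx
  · exact Finset.subset_union_left
  · exact Finset.subset_union_right
  · exact (activeSet_subset_of_mem_openSegment ha hb hx).trans Finset.subset_union_left

lemma isExtreme_setOf_subset_activeSet (T : Finset (Fin N)) :
    IsExtreme ℝ (polytope η κ) {x ∈ polytope η κ | T ⊆ activeSet η κ x} :=
  ⟨sep_subset _ _, fun _ ha _ hb _ hx hxab =>
    ⟨ha, hx.2.trans (activeSet_subset_of_mem_openSegment ha hb hxab)⟩⟩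

lemma isCompact_setOf_subset_activeSet (hc : IsCompact (polytope η κ)) (T : Finset (Fin N)) :
    IsCompact {x ∈ polytope η κ | T ⊆ activeSet η κ x} := by
  have hclosed : IsClosed {x | T ⊆ activeSet η κ x} := by
    simp only [Finset.subset_iff, mem_activeSet, ofPred_forall]
    exact isClosed_biInter fun k _ => isClosed_eq (by fun_prop) (by fun_prop)
  exact hc.inter_right hclosed

lemma exists_mem_extremePoints_subset_activeSet (hc : IsCompact (polytope η κ))
    (hy : y ∈ polytope η κ) :
    ∃ v ∈ extremePoints ℝ (polytope η κ), activeSet η κ y ⊆ activeSet η κ v := by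
  obtain ⟨v, hv⟩ := (isCompact_setOf_subset_activeSet hc (activeSet η κ y)).extremePoints_nonempty
    ⟨y, hy, Finset.Subset.rfl⟩
  exact ⟨v, (isExtreme_setOf_subset_activeSet _).extremePoints_subset_extremePoints hv, hv.1.2⟩

lemma eventually_add_smul_mem_polytope {u : Fin n → ℝ} (hx : x ∈ polytope η κ)
    (hu : ∀ k ∈ activeSet η κ x, dotp (η k) u ≤ 0) :
    ∀ᶠ t : ℝ in 𝓝[>] 0, x + t • u ∈ polytope η κ := by
  have htend : Tendsto (fun t : ℝ => (κ, x + t • u)) (𝓝[>] 0) (𝓝 (κ, x)) :=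
    (Continuous.tendsto' (by fun_prop) _ _ (by simp)).mono_left nhdsWithin_le_nhds
  filter_upwards [htend.eventually (eventually_lt_of_notMem_activeSet hx), self_mem_nhdsWithin]
    with t hinactive ht k
  by_cases hk : k ∈ activeSet η κ x
  · rw [dotp_add, dotp_smul]
    linarith [hx k, mul_nonpos_of_nonneg_of_nonpos (le_of_lt ht) (hu k hk)]
  · exact (hinactive k hk).le

lemma injective_activeMap_iff (hx : x ∈ polytope η κ) :
    Injective (activeMap η κ x) ↔ x ∈ extremePoints ℝ (polytope η κ) := by
  constructor
  · refine fun hinj => mem_extremePoints_iff_left.2 ⟨hx, fun a ha b hb hab => hinj ?_⟩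
    ext ⟨k, hk⟩
    have hka := activeSet_subset_of_mem_openSegment ha hb hab (mem_activeSet.2 hk)
    rw [activeMap_apply, activeMap_apply, hk, mem_activeSet.1 hka]
  · refine fun hext => (injective_iff_map_eq_zero _).2 fun u hu => ?_
    have hu₀ : ∀ k ∈ activeSet η κ x, dotp (η k) u = 0 := fun k hk =>
      congr_fun hu ⟨k, mem_activeSet.1 hk⟩
    obtain ⟨t, ⟨hpos, hneg⟩, ht⟩ := (((eventually_add_smul_mem_polytope (u := u) hx
      fun k hk => (hu₀ k hk).le).and (eventually_add_smul_mem_polytope (u := (-1 : ℝ) • u) hx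
        fun k hk => by rw [dotp_smul, hu₀ k hk, mul_zero])).and self_mem_nhdsWithin).exists
    have hmid : x ∈ openSegment ℝ (x + t • u) (x + t • (-1 : ℝ) • u) :=
      ⟨1 / 2, 1 / 2, by norm_num, by norm_num, by norm_num, by module⟩
    have htu : x + t • u = x := (mem_extremePoints_iff_left.1 hext).2 _ hpos _ hneg hmid
    exact (smul_eq_zero.1 (add_eq_left.1 htu)).resolve_left (ne_of_gt ht)

lemma eq_of_forall_dotp_eq (hv : v ∈ extremePoints ℝ (polytope η κ))
    (h : ∀ k ∈ activeSet η κ v, dotp (η k) x = dotp (η k) y) : x = y :=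
  (injective_activeMap_iff hv.1).2 hv (funext fun k => h k (mem_activeSet.2 k.2))

lemma finite_extremePoints : (extremePoints ℝ (polytope η κ)).Finite := by
  refine Set.Finite.of_finite_image (f := activeSet η κ) (Set.toFinite _) fun v hv w _ hvw => ?_
  refine eq_of_forall_dotp_eq hv fun k hk => ?_
  have hkw := hvw ▸ hk
  rw [mem_activeSet.1 hk, mem_activeSet.1 hkw]

lemma IsSimplePoly.card_activeSet_le (hs : IsSimplePoly η κ) (hx : x ∈ polytope η κ) :
    (activeSet η κ x).card ≤ n := by
  have h := LinearMap.finrank_le_finrank_of_surjective (hs.activeMap_surjective hx)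
  rwa [finrank_activeMap_codomain, Module.finrank_fin_fun] at h

lemma IsSimplePoly.card_activeSet_eq_iff (hs : IsSimplePoly η κ) (hx : x ∈ polytope η κ) :
    (activeSet η κ x).card = n ↔ x ∈ extremePoints ℝ (polytope η κ) := by
  rw [← injective_activeMap_iff hx, ← finrank_activeMap_codomain]
  constructor
  · intro h
    rw [LinearMap.injective_iff_surjective_of_finrank_eq_finrank (by rw [h]; simp)]
    exact hs.activeMap_surjective hx
  · intro h
    rw [← (LinearEquiv.ofBijective _ ⟨h, hs.activeMap_surjective hx⟩).finrank_eq]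
    simp

lemma exists_forall_lt_of_mem_extremePoints (hv : v ∈ extremePoints ℝ (polytope η κ)) :
    ∃ ℓ : (Fin n → ℝ) →L[ℝ] ℝ, ∀ y ∈ polytope η κ, y ≠ v → ℓ y < ℓ v := by
  refine ⟨∑ k ∈ activeSet η κ v, dotpCLM (η k), fun y hy hne => ?_⟩
  simp only [sum_apply, dotpCLM_apply]
  have hle : ∀ k ∈ activeSet η κ v, dotp (η k) y ≤ dotp (η k) v := fun k hk =>
    (hy k).trans (mem_activeSet.1 hk).ge
  refine Finset.sum_lt_sum hle ?_
  contrapose! hne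
  exact eq_of_forall_dotp_eq hv fun k hk => (hle k hk).antisymm (hne k hk)

end Vertex

section Edge

/-- An edge of a simple polytope: the intersection of the facets in `S`, with end vertices `v` and
`v'` at which it meets one further facet, `p` and `q` respectively. That it is the segment from `v`
to `v'` is recorded only through the facets it meets, which all contain one of the ends. -/
structure IsEdge (η : Fin N → Fin n → ℝ) (κ : Fin N → ℝ) (S : Finset (Fin N)) (p q : Fin N)
    (v v' : Fin n → ℝ) : Prop where
  mem_left : v ∈ extremePoints ℝ (polytope η κ)
  mem_right : v' ∈ extremePoints ℝ (polytope η κ)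
  notMem_left : p ∉ S
  notMem_right : q ∉ S
  activeSet_left : activeSet η κ v = insert p S
  activeSet_right : activeSet η κ v' = insert q S
  activeSet_subset : ∀ y ∈ polytope η κ, S ⊆ activeSet η κ y →
    activeSet η κ y ⊆ activeSet η κ v ∪ activeSet η κ v'

variable {S T : Finset (Fin N)} {p q : Fin N} {v v' y e : Fin n → ℝ}

lemma eq_add_smul_of_erase_subset (hv : v ∈ extremePoints ℝ (polytope η κ))
    (hep : dotp (η p) e = -1) (he : ∀ k ∈ (activeSet η κ v).erase p, dotp (η k) e = 0)
    (hy : (activeSet η κ v).erase p ⊆ activeSet η κ y) :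
    y = v + (κ p - dotp (η p) y) • e := by
  refine eq_of_forall_dotp_eq hv fun k hk => ?_
  rw [dotp_add, dotp_smul, mem_activeSet.1 hk]
  rcases eq_or_ne k p with rfl | hkp
  · rw [hep]; ring
  · have hk' := Finset.mem_erase.2 ⟨hkp, hk⟩
    rw [he k hk', mem_activeSet.1 (hy hk'), mul_zero, add_zero]

lemma exists_add_smul_mem_polytope_pos_dotp (hc : IsCompact (polytope η κ))
    (hv : v ∈ extremePoints ℝ (polytope η κ)) (hep : dotp (η p) e = -1)
    (he : ∀ k ∈ (activeSet η κ v).erase p, dotp (η k) e = 0) :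
    ∃ τ > (0 : ℝ), v + τ • e ∈ polytope η κ ∧
      (activeSet η κ v).erase p ⊆ activeSet η κ (v + τ • e) ∧
      ∃ q ∈ activeSet η κ (v + τ • e), 0 < dotp (η q) e := by
  set S := (activeSet η κ v).erase p
  have hsubset : ∀ y (t : ℝ), S ⊆ activeSet η κ y → S ⊆ activeSet η κ (y + t • e) := by
    intro y t hy k hk
    rw [mem_activeSet, dotp_add, dotp_smul, he k hk, mul_zero, add_zero, mem_activeSet.1 (hy hk)]
  have hdesc : ∀ y (t : ℝ), 0 < t → dotp (η p) (y + t • e) < dotp (η p) y := by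
    intro y t ht
    rw [dotp_add, dotp_smul, hep]; linarith
  have hvS : S ⊆ activeSet η κ v := Finset.erase_subset _ _
  obtain ⟨v', ⟨hv', hv'S⟩, hmin⟩ := (isCompact_setOf_subset_activeSet hc S).exists_isMinOn
    ⟨v, hv.1, hvS⟩ (continuous_dotp (η p)).continuousOn
  have hblocking : ∀ y ∈ polytope η κ, S ⊆ activeSet η κ y → dotp (η p) y ≤ dotp (η p) v' →
      ∃ q ∈ activeSet η κ y, 0 < dotp (η q) e := by
    intro y hy hyS hle
    by_contra! hblock
    obtain ⟨t, hyt, ht⟩ :=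
      ((eventually_add_smul_mem_polytope hy hblock).and self_mem_nhdsWithin).exists
    exact ((hdesc y t ht).trans_le hle).not_ge (hmin ⟨hyt, hsubset y t hyS⟩)
  have hlt : dotp (η p) v' < κ p := by
    by_contra! hle
    obtain ⟨q, hq, hqe⟩ := hblocking v hv.1 hvS ((hv.1 p).trans hle)
    rcases eq_or_ne q p with rfl | hqp
    · linarith
    · exact hqe.ne' (he q (Finset.mem_erase.2 ⟨hqp, hq⟩))
  have hv'e := eq_add_smul_of_erase_subset hv hep he hv'S
  exact ⟨κ p - dotp (η p) v', sub_pos.2 hlt, hv'e ▸ hv', hv'e ▸ hv'S,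
    hv'e ▸ hblocking v' hv' hv'S le_rfl⟩

lemma mem_segment_of_eq_add_smul {τ σ : ℝ} (hy : y = v + σ • e) (hτ : 0 < τ) (hσ₀ : 0 ≤ σ)
    (hστ : σ ≤ τ) : y ∈ segment ℝ v (v + τ • e) := by
  rw [segment_eq_image']
  refine ⟨σ / τ, ⟨by positivity, (div_le_one hτ).2 hστ⟩, ?_⟩
  simp only [add_sub_cancel_left, smul_smul, div_mul_cancel₀ _ hτ.ne', hy]

lemma IsSimplePoly.exists_isEdge (hs : IsSimplePoly η κ) (hc : IsCompact (polytope η κ))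
    (hv : v ∈ extremePoints ℝ (polytope η κ)) (hp : p ∈ activeSet η κ v)
    (hep : dotp (η p) e = -1) (he : ∀ k ∈ (activeSet η κ v).erase p, dotp (η k) e = 0) :
    ∃ q, ∃ τ > (0 : ℝ), IsEdge η κ ((activeSet η κ v).erase p) p q v (v + τ • e) := by
  obtain ⟨τ, hτ, hv', hS, q, hq, hqe⟩ := exists_add_smul_mem_polytope_pos_dotp hc hv hep he
  have hqS : q ∉ (activeSet η κ v).erase p := fun hqS => hqe.ne' (he q hqS)
  have hcard : (insert q ((activeSet η κ v).erase p)).card = n := by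
    rw [Finset.card_insert_of_notMem hqS, Finset.card_erase_add_one hp,
      (hs.card_activeSet_eq_iff hv.1).2 hv]
  have hactive : insert q ((activeSet η κ v).erase p) = activeSet η κ (v + τ • e) :=
    Finset.eq_of_subset_of_card_le (Finset.insert_subset hq hS)
      (hcard.symm ▸ hs.card_activeSet_le hv')
  refine ⟨q, τ, hτ, hv, (hs.card_activeSet_eq_iff hv').1 (hactive ▸ hcard),
    Finset.notMem_erase p _, hqS, (Finset.insert_erase hp).symm, hactive.symm,
    fun y hy hyS => ?_⟩
  have hye := eq_add_smul_of_erase_subset hv hep he hyS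
  have hle : κ p - dotp (η p) y ≤ τ := by
    have hqy := (hy q).trans (mem_activeSet.1 hq).ge
    rw [hye, dotp_add, dotp_add, dotp_smul, dotp_smul] at hqy
    exact le_of_mul_le_mul_right (le_of_add_le_add_left hqy) hqe
  exact activeSet_subset_union_of_mem_segment hv.1 hv'
    (mem_segment_of_eq_add_smul hye hτ (sub_nonneg.2 (hy p)) hle)

lemma IsSimplePoly.exists_isEdge_lt (hs : IsSimplePoly η κ) (hc : IsCompact (polytope η κ))
    (hv : v ∈ extremePoints ℝ (polytope η κ)) (hTv : T ⊆ activeSet η κ v)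
    (hy : y ∈ polytope η κ) (hTy : T ⊆ activeSet η κ y) {ℓ : (Fin n → ℝ) →L[ℝ] ℝ}
    (hℓ : ℓ v < ℓ y) : ∃ S p q v', T ⊆ S ∧ IsEdge η κ S p q v v' ∧ ℓ v < ℓ v' := by
  obtain ⟨L, hL⟩ := hs.exists_dotp_eq hv.1
  have hsub : y - v = ∑ k ∈ activeSet η κ v, (dotp (η k) y - κ k) • L (Pi.single k 1) := by
    refine eq_of_forall_dotp_eq hv fun l hl => ?_
    simp only [dotp_sub, dotp_sum, dotp_smul, hL _ l hl, Pi.single_apply, mul_ite, mul_one,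
      mul_zero, Finset.sum_ite_eq, if_pos hl, mem_activeSet.1 hl]
  have hpos : 0 < ∑ k ∈ activeSet η κ v, (dotp (η k) y - κ k) * ℓ (L (Pi.single k 1)) := by
    have h := sub_pos.2 hℓ
    rwa [← map_sub, hsub, map_sum, Finset.sum_congr rfl fun k _ => map_smul ℓ _ _] at h
  obtain ⟨p, hp, hpℓ⟩ := Finset.exists_lt_of_sum_lt (f := fun _ => (0 : ℝ)) (by simpa using hpos)
  have hslack : dotp (η p) y - κ p < 0 :=
    (sub_nonpos.2 (hy p)).lt_of_ne (left_ne_zero_of_mul hpℓ.ne')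
  have hdesc : ℓ (L (Pi.single p 1)) < 0 := neg_of_mul_pos_right hpℓ hslack.le
  have hpT : p ∉ T := fun hpT => hslack.ne (sub_eq_zero.2 (mem_activeSet.1 (hTy hpT)))
  obtain ⟨q, τ, hτ, hedge⟩ := hs.exists_isEdge hc hv hp (e := (-1 : ℝ) • L (Pi.single p 1))
    (by rw [dotp_smul, hL _ p hp]; simp)
    (fun k hk => by
      rw [dotp_smul, hL _ k (Finset.mem_of_mem_erase hk)]; simp [Finset.ne_of_mem_erase hk])
  refine ⟨_, p, q, _, fun k hk => ?_, hedge, ?_⟩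
  · exact Finset.mem_erase.2 ⟨ne_of_mem_of_not_mem hk hpT, hTv hk⟩
  · simp only [map_add, map_smul, smul_eq_mul]
    linarith [mul_pos_of_neg_of_neg (neg_lt_zero.2 hτ) hdesc]

lemma IsSimplePoly.extremePoints_induction (hs : IsSimplePoly η κ) (hc : IsCompact (polytope η κ))
    {Q : (Fin n → ℝ) → Prop} {v₀ : Fin n → ℝ} (hv₀ : v₀ ∈ extremePoints ℝ (polytope η κ))
    (hTv₀ : T ⊆ activeSet η κ v₀) (base : Q v₀)
    (step : ∀ S p q v v', IsEdge η κ S p q v v' → T ⊆ S → Q v' → Q v)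
    (hv : v ∈ extremePoints ℝ (polytope η κ)) (hTv : T ⊆ activeSet η κ v) : Q v := by
  -- As in the simplex method, from any vertex but `v₀` some edge increases a functional that is
  -- maximal only at `v₀`; follow it from a counterexample with the largest value.
  obtain ⟨ℓ, hℓ⟩ := exists_forall_lt_of_mem_extremePoints hv₀
  by_contra hQ
  obtain ⟨w, ⟨hw, hTw, hQw⟩, hmax⟩ := Set.exists_max_image
    {w ∈ extremePoints ℝ (polytope η κ) | T ⊆ activeSet η κ w ∧ ¬ Q w} ℓ
    (finite_extremePoints.subset (sep_subset _ _)) ⟨v, hv, hTv, hQ⟩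
  have hlt : ℓ w < ℓ v₀ := hℓ w hw.1 (by rintro rfl; exact hQw base)
  obtain ⟨S, p, q, w', hTS, hedge, hlt'⟩ := hs.exists_isEdge_lt hc hw hTw hv₀.1 hTv₀ hlt
  have hTw' : T ⊆ activeSet η κ w' :=
    hTS.trans (hedge.activeSet_right ▸ Finset.subset_insert q S)
  exact hlt'.not_ge (hmax w' ⟨hedge.mem_right, hTw', fun hQw' =>
    hQw (step S p q w w' hedge hTS hQw')⟩)

end Edge

section EdgeTranslation

variable {S : Finset (Fin N)} {i p q : Fin N} {v v' w : Fin n → ℝ}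

lemma IsEdge.eventually_mapsTo_tube (hedge : IsEdge η κ S p q v v') (hs : IsSimplePoly η κ)
    (hc : IsCompact (polytope η κ)) :
    ∀ᶠ r : (Fin N → ℝ) × ℝ × (Fin n → ℝ) in 𝓝 (κ, 0, 0), ∀ κ₂ : Fin N → ℝ,
      (∀ k ∈ S, κ₂ k = r.1 k + dotp (η k) r.2.2) → (∀ k ∉ S, κ₂ k = r.1 k) →
      dotp (η p) r.2.2 ≤ 0 → dotp (η q) r.2.2 ≤ 0 →
        MapsTo (· + r.2.2) (tube η r.1 S r.2.1) (tube η κ₂ S r.2.1) := by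
  have htend : Tendsto (fun r : (Fin N → ℝ) × ℝ × (Fin n → ℝ) =>
      ((fun k => r.1 k - |r.2.1| - |dotp (η k) r.2.2|, r.1) : (Fin N → ℝ) × (Fin N → ℝ)))
      (𝓝 (κ, 0, 0)) (𝓝 (κ, κ)) :=
    Continuous.tendsto' (by fun_prop) _ _ (by simp [dotp])
  filter_upwards [htend.eventually (hs.eventually_exists_subset_activeSet hc ⟨v, hedge.mem_left.1⟩)]
    with r hr κ₂ hS hSc hp hq x hx
  obtain ⟨y, hy, hxy⟩ := hr x hx.1
  have hyS : S ⊆ activeSet η κ y := fun k hk => hxy k (by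
    linarith [hx.2 k hk, le_abs_self r.2.1, abs_nonneg (dotp (η k) r.2.2)])
  have hySpq := hedge.activeSet_subset y hy hyS
  rw [hedge.activeSet_left, hedge.activeSet_right] at hySpq
  refine ⟨fun k => ?_, fun k hk => ?_⟩
  · rw [dotp_add]
    by_cases hk : k ∈ S
    · linarith [hx.1 k, hS k hk]
    rw [hSc k hk]
    by_cases hky : k ∈ activeSet η κ y
    · have hkpq : k = q ∨ k = p := by simpa [hk] using hySpq hky
      rcases hkpq with rfl | rfl <;> linarith [hx.1 k]
    · have hlt := not_le.1 fun hle => hky (hxy k hle)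
      linarith [abs_nonneg r.2.1, le_abs_self (dotp (η k) r.2.2)]
  · rw [dotp_add]
    linarith [hx.2 k hk, hS k hk]

lemma IsEdge.eventually_exists_near_left (hedge : IsEdge η κ S p q v v')
    (hs : IsSimplePoly η κ) :
    ∀ᶠ r : (Fin N → ℝ) × ℝ × (Fin n → ℝ) in 𝓝 (κ, 0, 0), 0 < r.2.1 → dotp (η p) r.2.2 < 0 →
      ∃ y, (∀ k, dotp (η k) y < r.1 k) ∧ (∀ k ∈ S, r.1 k - r.2.1 < dotp (η k) y) ∧
        r.1 p + dotp (η p) r.2.2 < dotp (η p) y := by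
  have htend : Tendsto (fun r : (Fin N → ℝ) × ℝ × (Fin n → ℝ) =>
      update (fun k => r.1 k - r.2.1 / 2) p (r.1 p + dotp (η p) r.2.2 / 2))
      (𝓝 (κ, 0, 0)) (𝓝 κ) :=
    Continuous.tendsto' (by fun_prop) _ _ (by simp [dotp])
  filter_upwards [htend.eventually (hs.eventually_exists_activeSet_eq hedge.mem_left.1)]
    with r ⟨y, hy, hyv⟩ hr hpr
  rw [hedge.activeSet_left] at hyv
  have hyp : dotp (η p) y = r.1 p + dotp (η p) r.2.2 / 2 := by
    rw [mem_activeSet.1 (hyv ▸ Finset.mem_insert_self p S), update_self]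
  refine ⟨y, fun k => ?_, fun k hk => ?_, by linarith⟩
  · rcases eq_or_ne k p with rfl | hkp
    · linarith
    · have hyk := hy k
      rw [update_of_ne hkp] at hyk
      linarith
  · have hyk := mem_activeSet.1 (hyv ▸ Finset.mem_insert_of_mem hk)
    rw [update_of_ne (ne_of_mem_of_not_mem hk hedge.notMem_left)] at hyk
    linarith

lemma measureReal_tube_lt {κ₁ κ₂ : Fin N → ℝ} {s : ℝ} {y z : Fin n → ℝ}
    (hc : IsCompact (polytope η κ₂)) (hmaps : MapsTo (· + z) (tube η κ₁ S s) (tube η κ₂ S s))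
    (hy : ∀ k, dotp (η k) y < κ₂ k) (hyS : ∀ k ∈ S, κ₂ k - s < dotp (η k) y)
    (hyp : κ₁ p + dotp (η p) z < dotp (η p) y) :
    volume.real (tube η κ₁ S s) < volume.real (tube η κ₂ S s) := by
  let U := {x | ∀ k, dotp (η k) x < κ₂ k} ∩ (⋂ k ∈ S, {x | κ₂ k - s < dotp (η k) x}) ∩
    {x | κ₁ p + dotp (η p) z < dotp (η p) x}
  have hU : IsOpen U :=
    ((isOpen_forall_dotp_lt η κ₂).inter (isOpen_biInter_finset fun k _ =>
      isOpen_lt continuous_const (continuous_dotp _))).inter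
        (isOpen_lt continuous_const (continuous_dotp _))
  have hyU : y ∈ U := ⟨⟨hy, mem_iInter₂.2 hyS⟩, hyp⟩
  have hUtube : U ⊆ tube η κ₂ S s := fun x hx => ⟨fun k => (hx.1.1 k).le, mem_iInter₂.1 hx.1.2⟩
  have hdisj : Disjoint ((· + z) '' tube η κ₁ S s) U := by
    rw [disjoint_left]
    rintro _ ⟨x, hx, rfl⟩ hxU
    have hxp := hxU.2
    rw [mem_ofPred_eq, dotp_add] at hxp
    linarith [hx.1 p]
  rw [← measureReal_image_add_right volume _ z]
  exact measureReal_lt_of_isOpen hmaps.image_subset hU ⟨y, hyU⟩ hUtube hdisj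
    (measure_ne_top_of_subset tube_subset_polytope hc.measure_ne_top)

lemma IsEdge.eventually_measureReal_tube_lt (hedge : IsEdge η κ S p q v v')
    (hs : IsSimplePoly η κ) (hc : IsCompact (polytope η κ)) :
    ∀ᶠ r : (Fin N → ℝ) × (Fin N → ℝ) × ℝ × (Fin n → ℝ) in 𝓝 (κ, κ, 0, 0), 0 < r.2.2.1 →
      (∀ k ∈ S, r.2.1 k = r.1 k + dotp (η k) r.2.2.2) → (∀ k ∉ S, r.2.1 k = r.1 k) →
      dotp (η p) r.2.2.2 < 0 → dotp (η q) r.2.2.2 ≤ 0 →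
        volume.real (tube η r.1 S r.2.2.1) < volume.real (tube η r.2.1 S r.2.2.1) := by
  have htend₁ : Tendsto (fun r : (Fin N → ℝ) × (Fin N → ℝ) × ℝ × (Fin n → ℝ) => (r.1, r.2.2))
      (𝓝 (κ, κ, 0, 0)) (𝓝 (κ, 0, 0)) := Continuous.tendsto' (by fun_prop) _ _ rfl
  have htend₂ : Tendsto (fun r : (Fin N → ℝ) × (Fin N → ℝ) × ℝ × (Fin n → ℝ) => r.2)
      (𝓝 (κ, κ, 0, 0)) (𝓝 (κ, 0, 0)) := Continuous.tendsto' (by fun_prop) _ _ rfl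
  have htend₃ : Tendsto (fun r : (Fin N → ℝ) × (Fin N → ℝ) × ℝ × (Fin n → ℝ) => r.2.1)
      (𝓝 (κ, κ, 0, 0)) (𝓝 κ) := Continuous.tendsto' (by fun_prop) _ _ rfl
  filter_upwards [htend₁.eventually (hedge.eventually_mapsTo_tube hs hc),
    htend₂.eventually (hedge.eventually_exists_near_left hs),
    htend₃.eventually (hs.eventually_isCompact hc ⟨v, hedge.mem_left.1⟩)]
    with r hmaps hnear hc₂ hr hS hSc hp hq
  obtain ⟨y, hy, hyS, hyp⟩ := hnear hr hp
  exact measureReal_tube_lt hc₂ (hmaps r.2.1 hS hSc hp.le hq) hy hyS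
    (hSc p hedge.notMem_left ▸ hyp)

lemma single_apply_eq_mul_dotp (hwi : dotp (η i) w = 1)
    (hwS : ∀ k ∈ S, k ≠ i → dotp (η k) w = 0) {k : Fin N} (hk : k ∈ S) (s : ℝ) :
    (Pi.single i s : Fin N → ℝ) k = s * dotp (η k) w := by
  rcases eq_or_ne k i with rfl | hki
  · rw [Pi.single_eq_same, hwi, mul_one]
  · rw [Pi.single_eq_of_ne hki, hwS k hk hki, mul_zero]

lemma IsEdge.dotp_eq_zero (hedge : IsEdge η κ S p q v v') (hs : IsSimplePoly η κ)
    (hc : IsCompact (polytope η κ)) (hi : VolLocallyAffine η κ i) (hiS : i ∈ S)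
    (hwi : dotp (η i) w = 1) (hwS : ∀ k ∈ S, k ≠ i → dotp (η k) w = 0)
    (hwq : dotp (η q) w = 0) : dotp (η p) w = 0 := by
  have hsingle {k} (hk : k ∈ S) (s : ℝ) := single_apply_eq_mul_dotp hwi hwS hk s
  have htend : Tendsto (fun s : ℝ => (κ, s)) (𝓝[>] 0) (𝓝 (κ, 0)) :=
    (Continuous.tendsto' (by fun_prop) _ _ rfl).mono_left nhdsWithin_le_nhds
  have heq := htend.eventually (hi.eventually_measureReal_tube hs hc ⟨v, hedge.mem_left.1⟩
    (Finset.notMem_erase i S))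
  rw [Finset.insert_erase hiS] at heq
  have hlt := hedge.eventually_measureReal_tube_lt hs hc
  rcases lt_trichotomy (dotp (η p) w) 0 with hneg | hzero | hpos
  · have htend : Tendsto (fun s : ℝ => (κ, κ + Pi.single i s, s, s • w)) (𝓝[>] 0)
        (𝓝 (κ, κ, 0, 0)) :=
      (Continuous.tendsto' (by fun_prop) _ _ (by simp)).mono_left nhdsWithin_le_nhds
    obtain ⟨s, ⟨heq, hlt⟩, hs₀⟩ :=
      ((heq.and (htend.eventually hlt)).and self_mem_nhdsWithin).exists
    refine absurd (heq (le_of_lt hs₀)) (hlt hs₀ ?_ ?_ ?_ ?_).ne'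
    · exact fun k hk => by simp [dotp_smul, hsingle hk]
    · exact fun k hk => by simp [(ne_of_mem_of_not_mem hiS hk).symm]
    · simpa only [dotp_smul] using mul_neg_of_pos_of_neg hs₀ hneg
    · simp [dotp_smul, hwq]
  · exact hzero
  · have htend : Tendsto (fun s : ℝ => (κ + Pi.single i s, κ, s, (-s) • w)) (𝓝[>] 0)
        (𝓝 (κ, κ, 0, 0)) :=
      (Continuous.tendsto' (by fun_prop) _ _ (by simp)).mono_left nhdsWithin_le_nhds
    obtain ⟨s, ⟨heq, hlt⟩, hs₀⟩ :=
      ((heq.and (htend.eventually hlt)).and self_mem_nhdsWithin).exists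
    refine absurd (heq (le_of_lt hs₀)) (hlt hs₀ ?_ ?_ ?_ ?_).ne
    · exact fun k hk => by simp [-neg_smul, dotp_smul, hsingle hk]
    · exact fun k hk => by simp [(ne_of_mem_of_not_mem hiS hk).symm]
    · simpa only [dotp_smul] using mul_neg_of_neg_of_pos (neg_lt_zero.2 hs₀) hpos
    · simp [-neg_smul, dotp_smul, hwq]

lemma VolLocallyAffine.flatFacet (hi : VolLocallyAffine η κ i) (hs : IsSimplePoly η κ)
    (hc : IsCompact (polytope η κ)) (hne : (facet η κ i).Nonempty) : FlatFacet η κ i := by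
  obtain ⟨x, hx, hxi⟩ := hne
  obtain ⟨v₀, hv₀, hxv₀⟩ := exists_mem_extremePoints_subset_activeSet hc hx
  have hiv₀ : i ∈ activeSet η κ v₀ := hxv₀ (mem_activeSet.2 hxi)
  obtain ⟨L, hL⟩ := hs.exists_dotp_eq hv₀.1
  set w := L (Pi.single i 1)
  have hwi : dotp (η i) w = 1 := by rw [hL _ i hiv₀, Pi.single_eq_same]
  refine ⟨w, ?_, fun j hji ⟨y, ⟨hy, hyi⟩, _, hyj⟩ => ?_⟩
  · rintro hw
    simp [hw, dotp] at hwi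
  obtain ⟨v, hv, hyv⟩ := exists_mem_extremePoints_subset_activeSet hc hy
  refine hs.extremePoints_induction hc (T := {i})
    (Q := fun v => ∀ k ∈ activeSet η κ v, k ≠ i → dotp (η k) w = 0) hv₀ (by simpa using hiv₀)
    (fun k hk hki => by rw [hL _ k hk, Pi.single_eq_of_ne hki]) ?_ hv
    (by simpa using hyv (mem_activeSet.2 hyi)) j (hyv (mem_activeSet.2 hyj)) hji
  intro S p q v v' hedge hiS hv' k hk hki
  rw [Finset.singleton_subset_iff] at hiS
  rw [hedge.activeSet_right] at hv'
  rw [hedge.activeSet_left, Finset.mem_insert] at hk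
  have hwS : ∀ l ∈ S, l ≠ i → dotp (η l) w = 0 := fun l hl => hv' l (Finset.mem_insert_of_mem hl)
  have hwq : dotp (η q) w = 0 := hv' q (Finset.mem_insert_self q S)
    (ne_of_mem_of_not_mem hiS hedge.notMem_right).symm
  rcases hk with rfl | hkS
  · exact hedge.dotp_eq_zero hs hc hi hiS hwi hwS hwq
  · exact hwS k hkS hki

end EdgeTranslation

lemma MassLinear.pervasive_or_flatFacet {H : Fin n → ℝ} {γ : Fin N → ℝ} {C : ℝ}
    (hH : MassLinear η κ H γ C) (hΔ : GoodPolytope η κ) {i : Fin N} (hγ : γ i ≠ 0) :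
    Pervasive η κ i ∨ FlatFacet η κ i := by
  obtain ⟨hs, hbdd, -, hfacet⟩ := hΔ
  have hc : IsCompact (polytope η κ) := Metric.isCompact_of_isClosed_isBounded
    (isClosed_polytope η κ) hbdd
  refine or_iff_not_imp_left.2 fun hi => ?_
  obtain ⟨j, hji, hdisj⟩ : ∃ j, j ≠ i ∧ ¬ (facet η κ i ∩ facet η κ j).Nonempty := by
    simpa [Pervasive] using hi
  rw [not_nonempty_iff_eq_empty, ← disjoint_iff_inter_eq_empty] at hdisj
  exact (hH.volLocallyAffine hs hc hji.symm hdisj (hfacet j) hγ).flatFacet hs hc (hfacet i)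

end MassLinearPaper

/-- If a simple polytope has no pervasive and no flat facets, every mass linear function
on it is constant. -/
theorem stmt10 {n N : ℕ} (η : Fin N → Fin n → ℝ) (κ : Fin N → ℝ) (H : Fin n → ℝ)
    (γ : Fin N → ℝ) (C : ℝ) (hΔ : GoodPolytope η κ)
    (hperv : ∀ i, ¬ Pervasive η κ i) (hflat : ∀ i, ¬ FlatFacet η κ i)
    (hml : MassLinear η κ H γ C) :
    ∀ κ₁ ∈ chamber η κ, ∀ κ₂ ∈ chamber η κ,
      dotp H (centroid η κ₁) = dotp H (centroid η κ₂) := by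
  have hγ : ∀ i, γ i = 0 := fun i => by_contra fun hi =>
    (hml.pervasive_or_flatFacet hΔ hi).elim (hperv i) (hflat i)
  intro κ₁ hκ₁ κ₂ hκ₂
  simp only [hml κ₁ hκ₁, hml κ₂ hκ₂, hγ, zero_mul]
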